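/- (Bombieri–Vaaler Siegel lemma, statement) Let A = (a_{mk}) be an s × r integer matrix of rank s with r > s. Then there exists a nonzero integer vector x ∈ ℤ^r with Ax = 0 and max_i |x_i| ≤ (D^{-1}·√|det(A·A^T)|)^{1/(r−s)}, where D is the greatest common divisor of the determinants of all s × s minors of A. -/

import Mathlib

open Matrix

open MeasureTheory
open scoped ENNReal Pointwise

/-! Factor `A = H * M`, where the integer matrix `M` has an integer right inverse. Then `A` and `M`
have the same kernel, the gcd of the maximal minors of `A` is `|det H|`, and
`√det (A Aᵀ) = |det H| √det (M Mᵀ)`, so it suffices to find a point of the lattice `ker M` of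
sup norm at most `√det (M Mᵀ) ^ (1 / (r - s))`. By Minkowski's theorem such a point exists once the
section of the unit cube by `ker M` is known to have volume at least `1 / √det (M Mᵀ)` in lattice
coordinates, which is Vaaler's cube slicing inequality.

For the latter, a one-dimensional Gaussian of total mass one and height one is less peaked than the
indicator of `[-1/2, 1/2]`: its integral against any symmetric log-concave function is smaller.
Marginals of symmetric log-concave functions are again symmetric log-concave (Prékopa–Leindler), so
the coordinates can be exchanged one at a time, and passing from the standard Gaussian to the unit
cube does not decrease any integral against a symmetric log-concave weight. Take as weight the
Gaussian `exp (-π |M x|² / ε²)`: the Gaussian side is a determinant, the cube side is at most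
`ε ^ s` times the volume of the section, and `ε → 0` gives the bound. -/

/-! ### One-dimensional Brunn–Minkowski and Prékopa–Leindler inequalities -/

theorem volume_add_volume_le_of_isCompact {K L : Set ℝ} (hK : IsCompact K) (hL : IsCompact L)
    (hK₀ : K.Nonempty) (hL₀ : L.Nonempty) : volume K + volume L ≤ volume (K + L) := by
  obtain ⟨M, hM⟩ := hK.exists_isGreatest hK₀
  obtain ⟨m, hm⟩ := hL.exists_isLeast hL₀
  -- `K + m` and `M + L` lie in `K + L` and meet only at `M + m`
  have hdisj : AEDisjoint volume ((fun x => x + m) '' K) ((fun x => M + x) '' L) := by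
    refine measure_mono_null (t := {M + m}) ?_ (by simp)
    rintro _ ⟨⟨x, hx, rfl⟩, ⟨y, hy, hxy⟩⟩
    have hxM := hM.2 hx
    have hmy := hm.2 hy
    simp only [Set.mem_singleton_iff] at *
    linarith
  have hmeas : NullMeasurableSet ((fun x => M + x) '' L) volume :=
    (hL.image (by fun_prop)).measurableSet.nullMeasurableSet
  calc volume K + volume L
      = volume ((fun x => x + m) '' K) + volume ((fun x => M + x) '' L) := by
        simp [Set.image_add_right, Set.image_add_left, measure_preimage_add,
          measure_preimage_add_right]
    _ = volume (((fun x => x + m) '' K) ∪ ((fun x => M + x) '' L)) :=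
        (measure_union₀ hmeas hdisj).symm
    _ ≤ volume (K + L) := by
        refine measure_mono (Set.union_subset ?_ ?_)
        · exact Set.image_subset_iff.2 fun x hx => Set.add_mem_add hx hm.1
        · exact Set.image_subset_iff.2 fun x hx => Set.add_mem_add hM.1 hx

theorem volume_add_volume_le {A B : Set ℝ} (hA : MeasurableSet A) (hB : MeasurableSet B)
    (hA₀ : A.Nonempty) (hB₀ : B.Nonempty) : volume A + volume B ≤ volume (A + B) := by
  obtain ⟨x, hx⟩ := hA₀
  obtain ⟨y, hy⟩ := hB₀
  have hcompact (K L : Set ℝ) (hK : K ⊆ A ∧ IsCompact K) (hL : L ⊆ B ∧ IsCompact L) :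
      volume K + volume L ≤ volume (A + B) :=
    calc volume K + volume L ≤ volume (insert x K) + volume (insert y L) := by
          gcongr <;> exact Set.subset_insert _ _
      _ ≤ volume (insert x K + insert y L) :=
          volume_add_volume_le_of_isCompact (hK.2.insert x) (hL.2.insert y)
            (Set.insert_nonempty _ _) (Set.insert_nonempty _ _)
      _ ≤ volume (A + B) := measure_mono <| Set.add_subset_add
          (Set.insert_subset hx hK.1) (Set.insert_subset hy hL.1)
  rw [hA.measure_eq_iSup_isCompact, hB.measure_eq_iSup_isCompact]
  simp only [iSup_and', iSup_subtype']
  have (S : Set ℝ) : Nonempty {K : Set ℝ // K ⊆ S ∧ IsCompact K} := ⟨⟨∅, by simp⟩⟩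
  exact ENNReal.iSup_add_iSup_le fun K L => hcompact K L K.2 L.2

theorem ofReal_mul_volume_add_le {a b : ℝ} (ha : 0 < a) (hb : 0 < b) {A B : Set ℝ}
    (hA : MeasurableSet A) (hB : MeasurableSet B) (hA₀ : A.Nonempty) (hB₀ : B.Nonempty) :
    ENNReal.ofReal a * volume A + ENNReal.ofReal b * volume B ≤ volume (a • A + b • B) := by
  have hsmul (c : ℝ) (S : Set ℝ) (hc : 0 < c) :
      volume (c • S) = ENNReal.ofReal c * volume S := by
    simp [Measure.addHaar_smul, abs_of_pos hc]
  rw [← hsmul a A ha, ← hsmul b B hb]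
  exact volume_add_volume_le (hA.const_smul₀ a) (hB.const_smul₀ b) hA₀.smul_set hB₀.smul_set

theorem ennreal_rpow_mul_rpow_le {a b : ℝ} (ha : 0 < a) (hb : 0 < b) (hab : a + b = 1)
    (x y : ℝ≥0∞) : x ^ a * y ^ b ≤ ENNReal.ofReal a * x + ENNReal.ofReal b * y := by
  rcases eq_or_ne x ⊤ with rfl | hx
  · simp [ENNReal.mul_top, ha]
  rcases eq_or_ne y ⊤ with rfl | hy
  · simp [ENNReal.mul_top, hb]
  lift x to NNReal using hx
  lift y to NNReal using hy
  have h := NNReal.geom_mean_le_arith_mean2_weighted ⟨a, ha.le⟩ ⟨b, hb.le⟩ x y (NNReal.eq hab)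
  rw [← ENNReal.coe_rpow_of_nonneg _ ha.le, ← ENNReal.coe_rpow_of_nonneg _ hb.le,
    ENNReal.ofReal_eq_coe_nnreal ha.le, ENNReal.ofReal_eq_coe_nnreal hb.le]
  exact_mod_cast h

theorem lintegral_eq_lintegral_meas_ofReal_lt {α : Type*} [MeasurableSpace α] (μ : Measure α)
    {f : α → ℝ≥0∞} (hf : Measurable f) (hf_top : ∀ x, f x ≠ ⊤) :
    ∫⁻ x, f x ∂μ = ∫⁻ t in Set.Ioi 0, μ {x | ENNReal.ofReal t < f x} := by
  calc ∫⁻ x, f x ∂μ = ∫⁻ x, ENNReal.ofReal (f x).toReal ∂μ := by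
        simp only [ENNReal.ofReal_toReal (hf_top _)]
    _ = ∫⁻ t in Set.Ioi 0, μ {x | t < (f x).toReal} :=
        lintegral_eq_lintegral_meas_lt μ (.of_forall fun _ => ENNReal.toReal_nonneg)
          hf.ennreal_toReal.aemeasurable
    _ = ∫⁻ t in Set.Ioi 0, μ {x | ENNReal.ofReal t < f x} :=
        setLIntegral_congr_fun measurableSet_Ioi fun t ht => by
          simp only [ENNReal.ofReal_lt_iff_lt_toReal (Set.mem_Ioi.1 ht).le (hf_top _)]

section PrekopaLeindler

variable {a b : ℝ} {f g h : ℝ → ℝ≥0∞}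

theorem ofReal_mul_lintegral_add_le_of_iSup_eq_one (ha : 0 < a) (hb : 0 < b) (hab : a + b = 1)
    (hf : Measurable f) (hg : Measurable g) (hh : Measurable h)
    (hf_sup : ⨆ x, f x = 1) (hg_sup : ⨆ x, g x = 1)
    (hfgh : ∀ x y, f x ^ a * g y ^ b ≤ h (a • x + b • y)) :
    ENNReal.ofReal a * (∫⁻ x, f x) + ENNReal.ofReal b * (∫⁻ x, g x) ≤ ∫⁻ x, h x := by
  have hf_le (x : ℝ) : f x ≤ 1 := hf_sup ▸ le_iSup f x
  have hg_le (x : ℝ) : g x ≤ 1 := hg_sup ▸ le_iSup g x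
  have hne_top {u : ℝ≥0∞} (hu : u ≤ 1) : u ≠ ⊤ := ne_top_of_le_ne_top ENNReal.one_ne_top hu
  have hlevel_meas (f : ℝ → ℝ≥0∞) : Measurable fun t : ℝ => volume {x | ENNReal.ofReal t < f x} :=
    Antitone.measurable fun s t hst => measure_mono fun x hx =>
      (ENNReal.ofReal_le_ofReal hst).trans_lt hx
  have hlevel {t : ℝ} (ht : 0 < t) : a • {x | ENNReal.ofReal t < f x} +
      b • {x | ENNReal.ofReal t < g x} ⊆ {z | ENNReal.ofReal t < min (h z) 1} := by
    rintro _ ⟨_, ⟨x, hx, rfl⟩, _, ⟨y, hy, rfl⟩, rfl⟩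
    refine lt_min (lt_of_lt_of_le ?_ (hfgh x y)) (hx.trans_le (hf_le x))
    calc ENNReal.ofReal t = ENNReal.ofReal t ^ a * ENNReal.ofReal t ^ b := by
          rw [← ENNReal.rpow_add _ _ (by simpa using ht) (by simp), hab, ENNReal.rpow_one]
      _ < f x ^ a * g y ^ b :=
          ENNReal.mul_lt_mul (ENNReal.rpow_lt_rpow hx ha) (ENNReal.rpow_lt_rpow hy hb)
  refine le_trans ?_ (lintegral_mono fun x => min_le_left (h x) 1)
  rw [lintegral_eq_lintegral_meas_ofReal_lt _ hf fun x => hne_top (hf_le x),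
    lintegral_eq_lintegral_meas_ofReal_lt _ hg fun x => hne_top (hg_le x),
    lintegral_eq_lintegral_meas_ofReal_lt _ (hh.min measurable_const)
      fun x => hne_top (min_le_right _ _),
    ← lintegral_const_mul _ (hlevel_meas f), ← lintegral_const_mul _ (hlevel_meas g),
    ← lintegral_add_left ((hlevel_meas f).const_mul _)]
  refine setLIntegral_mono (hlevel_meas _) fun t ht => ?_
  rcases lt_or_ge (ENNReal.ofReal t) 1 with ht₁ | ht₁
  · have hf_nonempty : ∃ x, ENNReal.ofReal t < f x := lt_iSup_iff.1 (ht₁.trans_eq hf_sup.symm)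
    have hg_nonempty : ∃ x, ENNReal.ofReal t < g x := lt_iSup_iff.1 (ht₁.trans_eq hg_sup.symm)
    exact (ofReal_mul_volume_add_le ha hb (measurableSet_lt measurable_const hf)
      (measurableSet_lt measurable_const hg) hf_nonempty hg_nonempty).trans
      (measure_mono (hlevel ht))
  · simp [((hf_le _).trans ht₁).not_gt, ((hg_le _).trans ht₁).not_gt]

theorem prekopa_leindler_of_iSup_ne_top (ha : 0 < a) (hb : 0 < b) (hab : a + b = 1)
    (hf : Measurable f) (hg : Measurable g) (hh : Measurable h)
    (hf_sup : ⨆ x, f x ≠ ⊤) (hg_sup : ⨆ x, g x ≠ ⊤)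
    (hfgh : ∀ x y, f x ^ a * g y ^ b ≤ h (a • x + b • y)) :
    (∫⁻ x, f x) ^ a * (∫⁻ x, g x) ^ b ≤ ∫⁻ x, h x := by
  rcases eq_or_ne (⨆ x, f x) 0 with hf₀ | hf₀
  · simp [ENNReal.iSup_eq_zero.1 hf₀, ha]
  rcases eq_or_ne (⨆ x, g x) 0 with hg₀ | hg₀
  · simp [ENNReal.iSup_eq_zero.1 hg₀, hb]
  set F := ⨆ x, f x
  set G := ⨆ x, g x
  have hF₀ : F ^ a ≠ 0 := by simp [hf₀, hf_sup, ENNReal.rpow_eq_zero_iff]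
  have hG₀ : G ^ b ≠ 0 := by simp [hg₀, hg_sup, ENNReal.rpow_eq_zero_iff]
  have hF_top : F ^ a ≠ ⊤ := ENNReal.rpow_ne_top_of_nonneg ha.le hf_sup
  have hG_top : G ^ b ≠ ⊤ := ENNReal.rpow_ne_top_of_nonneg hb.le hg_sup
  have hscale (u v : ℝ≥0∞) :
      (F⁻¹ * u) ^ a * (G⁻¹ * v) ^ b = (F ^ a * G ^ b)⁻¹ * (u ^ a * v ^ b) := by
    rw [ENNReal.mul_rpow_of_nonneg _ _ ha.le, ENNReal.mul_rpow_of_nonneg _ _ hb.le,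
      ENNReal.inv_rpow, ENNReal.inv_rpow, ENNReal.mul_inv (.inl hF₀) (.inl hF_top)]
    ring
  have hnormalized := ofReal_mul_lintegral_add_le_of_iSup_eq_one ha hb hab
    (hf.const_mul F⁻¹) (hg.const_mul G⁻¹) (hh.const_mul (F ^ a * G ^ b)⁻¹)
    (by rw [← ENNReal.mul_iSup]; exact ENNReal.inv_mul_cancel hf₀ hf_sup)
    (by rw [← ENNReal.mul_iSup]; exact ENNReal.inv_mul_cancel hg₀ hg_sup)
    (fun x y => by rw [hscale]; gcongr; exact hfgh x y)
  have hgeom := (ennreal_rpow_mul_rpow_le ha hb hab _ _).trans hnormalized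
  rw [lintegral_const_mul _ hf, lintegral_const_mul _ hg, lintegral_const_mul _ hh, hscale] at hgeom
  exact (ENNReal.mul_le_mul_iff_right
    (ENNReal.inv_ne_zero.2 (ENNReal.mul_ne_top hF_top hG_top))
    (ENNReal.inv_ne_top.2 (mul_ne_zero hF₀ hG₀))).1 hgeom

theorem lintegral_eq_iSup_lintegral_min_natCast {α : Type*} [MeasurableSpace α] (μ : Measure α)
    {f : α → ℝ≥0∞} (hf : Measurable f) : ∫⁻ x, f x ∂μ = ⨆ n : ℕ, ∫⁻ x, min (f x) n ∂μ := by
  rw [← lintegral_iSup (fun n => hf.min measurable_const)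
    fun m n hmn x => min_le_min le_rfl (by exact_mod_cast hmn)]
  refine lintegral_congr fun x => ?_
  simpa [ENNReal.iSup_natCast] using inf_iSup_eq (f x) fun n : ℕ => (n : ℝ≥0∞)

theorem prekopa_leindler (ha : 0 < a) (hb : 0 < b) (hab : a + b = 1)
    (hf : Measurable f) (hg : Measurable g) (hh : Measurable h)
    (hfgh : ∀ x y, f x ^ a * g y ^ b ≤ h (a • x + b • y)) :
    (∫⁻ x, f x) ^ a * (∫⁻ x, g x) ^ b ≤ ∫⁻ x, h x := by
  have hiSup_rpow {c : ℝ} (hc : 0 < c) (u : ℕ → ℝ≥0∞) : (⨆ n, u n) ^ c = ⨆ n, u n ^ c :=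
    (ENNReal.orderIsoRpow c hc).map_iSup u
  have hmin_ne_top (f : ℝ → ℝ≥0∞) (n : ℕ) : ⨆ x, min (f x) n ≠ ⊤ :=
    ne_top_of_le_ne_top (ENNReal.natCast_ne_top n) (iSup_le fun x => min_le_right _ _)
  rw [lintegral_eq_iSup_lintegral_min_natCast _ hf, lintegral_eq_iSup_lintegral_min_natCast _ hg,
    hiSup_rpow ha, hiSup_rpow hb, ENNReal.iSup_mul]
  simp only [ENNReal.mul_iSup]
  refine iSup₂_le fun m n => prekopa_leindler_of_iSup_ne_top ha hb hab (hf.min measurable_const)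
    (hg.min measurable_const) hh (hmin_ne_top f m) (hmin_ne_top g n) fun x y => ?_
  refine le_trans ?_ (hfgh x y)
  gcongr <;> exact min_le_left _ _

end PrekopaLeindler

theorem lmarginal_rpow_mul_rpow_le {ι : Type*} [DecidableEq ι] {a b : ℝ} (ha : 0 < a)
    (hb : 0 < b) (hab : a + b = 1) {f g h : (ι → ℝ) → ℝ≥0∞} (hf : Measurable f)
    (hg : Measurable g) (hh : Measurable h)
    (hfgh : ∀ x y, f x ^ a * g y ^ b ≤ h (a • x + b • y)) (s : Finset ι) (x y : ι → ℝ) :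
    (∫⋯∫⁻_s, f) x ^ a * (∫⋯∫⁻_s, g) y ^ b ≤ (∫⋯∫⁻_s, h) (a • x + b • y) := by
  induction s using Finset.induction generalizing x y with
  | empty => simpa using hfgh x y
  | insert i s hi ih =>
    rw [lmarginal_insert _ hf hi, lmarginal_insert _ hg hi, lmarginal_insert _ hh hi]
    refine prekopa_leindler ha hb hab ((hf.lmarginal _).comp (measurable_update x))
      ((hg.lmarginal _).comp (measurable_update y))
      ((hh.lmarginal _).comp (measurable_update _)) fun u v => ?_
    simpa only [← Function.update_smul, ← Function.update_add] using
      ih (Function.update x i u) (Function.update y i v)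

theorem prekopa_leindler_pi {ι : Type*} [Fintype ι] {a b : ℝ} (ha : 0 < a) (hb : 0 < b)
    (hab : a + b = 1) {f g h : (ι → ℝ) → ℝ≥0∞} (hf : Measurable f) (hg : Measurable g)
    (hh : Measurable h) (hfgh : ∀ x y, f x ^ a * g y ^ b ≤ h (a • x + b • y)) :
    (∫⁻ x, f x) ^ a * (∫⁻ x, g x) ^ b ≤ ∫⁻ x, h x := by
  classical
  simpa only [lmarginal_univ, ← volume_pi] using
    lmarginal_rpow_mul_rpow_le ha hb hab hf hg hh hfgh Finset.univ 0 0

/-! ### Symmetric log-concave functions -/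

/-- Measurable even functions that are log-concave, the class stable under products, marginals and
linear substitutions. Log-concavity is the multiplicative inequality in `ℝ≥0∞`, so that
indicators of convex sets qualify. -/
structure SymmLogConcave {E : Type*} [MeasurableSpace E] [AddCommGroup E] [Module ℝ E]
    (f : E → ℝ≥0∞) : Prop where
  measurable : Measurable f
  even : Function.Even f
  rpow_mul_rpow_le : ∀ ⦃a b : ℝ⦄, 0 < a → 0 < b → a + b = 1 →
    ∀ x y, f x ^ a * f y ^ b ≤ f (a • x + b • y)

namespace SymmLogConcave

section Basic

variable {E F : Type*} [MeasurableSpace E] [AddCommGroup E] [Module ℝ E] [MeasurableSpace F]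
  [AddCommGroup F] [Module ℝ F] {f g : E → ℝ≥0∞}

theorem one : SymmLogConcave (1 : E → ℝ≥0∞) where
  measurable := measurable_one
  even _ := rfl
  rpow_mul_rpow_le a b _ _ _ x y := by simp

theorem mul (hf : SymmLogConcave f) (hg : SymmLogConcave g) : SymmLogConcave (f * g) where
  measurable := hf.measurable.mul hg.measurable
  even := hf.even.mul_even hg.even
  rpow_mul_rpow_le a b ha hb hab x y :=
    calc (f x * g x) ^ a * (f y * g y) ^ b
        = (f x ^ a * f y ^ b) * (g x ^ a * g y ^ b) := by
          rw [ENNReal.mul_rpow_of_nonneg _ _ ha.le, ENNReal.mul_rpow_of_nonneg _ _ hb.le]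
          ring
      _ ≤ f (a • x + b • y) * g (a • x + b • y) :=
          mul_le_mul' (hf.rpow_mul_rpow_le ha hb hab x y) (hg.rpow_mul_rpow_le ha hb hab x y)

theorem prod {ι : Type*} {f : ι → E → ℝ≥0∞} (s : Finset ι) (hf : ∀ i, SymmLogConcave (f i)) :
    SymmLogConcave (∏ i ∈ s, f i) :=
  Finset.prod_induction f SymmLogConcave (fun _ _ => mul) one fun i _ => hf i

theorem comp_linearMap {f : F → ℝ≥0∞} (hf : SymmLogConcave f) {L : E →ₗ[ℝ] F}
    (hL : Measurable L) : SymmLogConcave (f ∘ L) where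
  measurable := hf.measurable.comp hL
  even x := by simp [hf.even (L x)]
  rpow_mul_rpow_le a b ha hb hab x y := by
    simpa using hf.rpow_mul_rpow_le ha hb hab (L x) (L y)

theorem indicator_one {S : Set E} (hS : MeasurableSet S) (hS_convex : Convex ℝ S)
    (hS_neg : ∀ x ∈ S, -x ∈ S) : SymmLogConcave (S.indicator (1 : E → ℝ≥0∞)) where
  measurable := measurable_one.indicator hS
  even x := by
    have : -x ∈ S ↔ x ∈ S := ⟨fun h => neg_neg x ▸ hS_neg _ h, hS_neg x⟩
    by_cases hx : x ∈ S <;> simp [this, hx]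
  rpow_mul_rpow_le a b ha hb hab x y := by
    by_cases hx : x ∈ S
    · by_cases hy : y ∈ S
      · simp [hx, hy, hS_convex hx hy ha.le hb.le hab]
      · simp [hy, hb]
    · simp [hx, ha]

theorem le_apply_smul (hf : SymmLogConcave f) {c : ℝ} (hc : |c| ≤ 1) (x : E) :
    f x ≤ f (c • x) := by
  obtain ⟨hc₁, hc₂⟩ := abs_le.1 hc
  rcases hc₁.eq_or_lt with rfl | hc₁
  · simp [hf.even x]
  rcases hc₂.eq_or_lt with rfl | hc₂
  · simp
  have ha : 0 < (1 + c) / 2 := by linarith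
  have hb : 0 < (1 - c) / 2 := by linarith
  have hab : (1 + c) / 2 + (1 - c) / 2 = 1 := by ring
  calc f x = f x ^ ((1 + c) / 2) * f (-x) ^ ((1 - c) / 2) := by
        rw [hf.even, ← ENNReal.rpow_add_of_nonneg _ _ ha.le hb.le, hab, ENNReal.rpow_one]
    _ ≤ f (((1 + c) / 2) • x + ((1 - c) / 2) • -x) := hf.rpow_mul_rpow_le ha hb hab x (-x)
    _ = f (c • x) := by
        congr 1
        module

theorem le_apply_zero (hf : SymmLogConcave f) (x : E) : f x ≤ f 0 := by
  simpa using hf.le_apply_smul (c := 0) (by simp) x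

end Basic

theorem apply_le_of_abs_le {f : ℝ → ℝ≥0∞} (hf : SymmLogConcave f) {t u : ℝ} (h : |t| ≤ |u|) :
    f u ≤ f t := by
  rcases eq_or_ne u 0 with rfl | hu
  · simp_all
  · have hc : |t / u| ≤ 1 := by rw [abs_div]; exact div_le_one_of_le₀ h (abs_nonneg u)
    simpa [hu] using hf.le_apply_smul hc u

theorem lmarginal {ι : Type*} [DecidableEq ι] {f : (ι → ℝ) → ℝ≥0∞} (hf : SymmLogConcave f)
    (s : Finset ι) : SymmLogConcave (∫⋯∫⁻_s, f) where
  measurable := hf.measurable.lmarginal _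
  even x := by
    have hneg (y : s → ℝ) : Function.updateFinset (-x) s (-y) = -Function.updateFinset x s y := by
      ext i
      by_cases hi : i ∈ s <;> simp [Function.updateFinset, hi]
    calc (∫⋯∫⁻_s, f) (-x) = ∫⁻ y : s → ℝ, f (Function.updateFinset (-x) s (-y)) :=
          (lintegral_neg_eq_self fun y : s → ℝ => f (Function.updateFinset (-x) s y)).symm
      _ = (∫⋯∫⁻_s, f) x := by simp only [hneg, hf.even _]; rfl
  rpow_mul_rpow_le a b ha hb hab :=
    lmarginal_rpow_mul_rpow_le ha hb hab hf.measurable hf.measurable hf.measurable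
      (hf.rpow_mul_rpow_le ha hb hab) s

theorem lintegral_prodMk {E κ : Type*} [MeasurableSpace E] [AddCommGroup E] [Module ℝ E]
    [Fintype κ] {F : E × (κ → ℝ) → ℝ≥0∞} (hF : SymmLogConcave F) :
    SymmLogConcave fun x => ∫⁻ y, F (x, y) where
  measurable := hF.measurable.lintegral_prod_right'
  even x :=
    calc ∫⁻ y, F (-x, y) = ∫⁻ y, F (-x, -y) :=
          (lintegral_neg_eq_self fun y => F (-x, y)).symm
      _ = ∫⁻ y, F (x, y) := lintegral_congr fun y => hF.even (x, y)
  rpow_mul_rpow_le a b ha hb hab x x' := by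
    have hmeas (x : E) : Measurable fun y => F (x, y) := hF.measurable.comp measurable_prodMk_left
    exact prekopa_leindler_pi ha hb hab (hmeas x) (hmeas x') (hmeas _) fun y y' =>
      hF.rpow_mul_rpow_le ha hb hab (x, y) (x', y')

end SymmLogConcave

/-! ### The peakedness order -/

/-- `φ` is less peaked than `ψ`: every symmetric log-concave weight gives `ψ` the larger
integral. -/
def LessPeaked (φ ψ : ℝ → ℝ≥0∞) : Prop :=
  ∀ ⦃F : ℝ → ℝ≥0∞⦄, SymmLogConcave F → ∫⁻ t, F t * φ t ≤ ∫⁻ t, F t * ψ t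

theorem lmarginal_mul_eval {ι : Type*} [DecidableEq ι] {f : (ι → ℝ) → ℝ≥0∞} (hf : Measurable f)
    (φ : ℝ → ℝ≥0∞) {s : Finset ι} {i : ι} (hi : i ∉ s) (x : ι → ℝ) :
    (∫⋯∫⁻_s, fun x => f x * φ (x i)) x = (∫⋯∫⁻_s, f) x * φ (x i) := by
  simp only [MeasureTheory.lmarginal, Function.updateFinset, hi, dite_false]
  exact lintegral_mul_const _ (hf.comp measurable_updateFinset)

theorem lintegral_mul_eval {ι : Type*} [Fintype ι] [DecidableEq ι] {f : (ι → ℝ) → ℝ≥0∞}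
    (hf : Measurable f) {φ : ℝ → ℝ≥0∞} (hφ : Measurable φ) (i : ι) :
    ∫⁻ x, f x * φ (x i) = ∫⁻ t, (∫⋯∫⁻_(Finset.univ.erase i), f) (Pi.single i t) * φ t := by
  have hmeas : Measurable fun x : ι → ℝ => f x * φ (x i) := by fun_prop
  calc ∫⁻ x, f x * φ (x i) = (∫⋯∫⁻_Finset.univ, fun x => f x * φ (x i)) 0 := by
        rw [lmarginal_univ, volume_pi]
    _ = ∫⁻ t, (∫⋯∫⁻_(Finset.univ.erase i), fun x => f x * φ (x i)) (Pi.single i t) :=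
        lmarginal_erase _ hmeas (Finset.mem_univ i) 0
    _ = ∫⁻ t, (∫⋯∫⁻_(Finset.univ.erase i), f) (Pi.single i t) * φ t := by
        simp only [lmarginal_mul_eval hf φ (Finset.notMem_erase i _), Pi.single_eq_same]

namespace LessPeaked

variable {ι : Type*} [Fintype ι] {f : (ι → ℝ) → ℝ≥0∞}

theorem lintegral_mul_eval_le {φ ψ : ℝ → ℝ≥0∞} (h : LessPeaked φ ψ) (hφ : Measurable φ)
    (hψ : Measurable ψ) (hf : SymmLogConcave f) (i : ι) :
    ∫⁻ x, f x * φ (x i) ≤ ∫⁻ x, f x * ψ (x i) := by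
  classical
  rw [lintegral_mul_eval hf.measurable hφ, lintegral_mul_eval hf.measurable hψ]
  exact h <| (hf.lmarginal _).comp_linearMap (L := LinearMap.single ℝ (fun _ => ℝ) i)
    (measurable_update 0)

theorem lintegral_mul_prod_le {φ ψ : ι → ℝ → ℝ≥0∞} (h : ∀ i, LessPeaked (φ i) (ψ i))
    (hφ : ∀ i, SymmLogConcave (φ i)) (hψ : ∀ i, SymmLogConcave (ψ i)) (hf : SymmLogConcave f)
    (s : Finset ι) : ∫⁻ x, f x * ∏ i ∈ s, φ i (x i) ≤ ∫⁻ x, f x * ∏ i ∈ s, ψ i (x i) := by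
  classical
  have heval {χ : ι → ℝ → ℝ≥0∞} (hχ : ∀ i, SymmLogConcave (χ i)) (i : ι) :
      SymmLogConcave fun x : ι → ℝ => χ i (x i) :=
    (hχ i).comp_linearMap (L := (LinearMap.proj i : (ι → ℝ) →ₗ[ℝ] ℝ)) (measurable_pi_apply i)
  induction s using Finset.induction generalizing f with
  | empty => simp
  | insert i s hi ih =>
    have hprod : SymmLogConcave fun x : ι → ℝ => ∏ j ∈ s, ψ j (x j) := by
      simpa [Finset.prod_fn] using SymmLogConcave.prod s (heval hψ)
    calc ∫⁻ x, f x * ∏ j ∈ insert i s, φ j (x j)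
        = ∫⁻ x, (f x * φ i (x i)) * ∏ j ∈ s, φ j (x j) := by
          simp only [Finset.prod_insert hi, mul_assoc]
      _ ≤ ∫⁻ x, (f x * φ i (x i)) * ∏ j ∈ s, ψ j (x j) := ih (hf.mul (heval hφ i))
      _ = ∫⁻ x, (f x * ∏ j ∈ s, ψ j (x j)) * φ i (x i) :=
          lintegral_congr fun x => mul_right_comm _ _ _
      _ ≤ ∫⁻ x, (f x * ∏ j ∈ s, ψ j (x j)) * ψ i (x i) :=
          (h i).lintegral_mul_eval_le (hφ i).measurable (hψ i).measurable (hf.mul hprod) i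
      _ = ∫⁻ x, f x * ∏ j ∈ insert i s, ψ j (x j) := by
          simp only [Finset.prod_insert hi, mul_assoc, mul_comm (ψ i _)]

end LessPeaked

/-- Indicator function of `[-1/2, 1/2]`; its products are the indicators of the unit cubes centred
at the origin. -/
noncomputable def centeredIndicator : ℝ → ℝ≥0∞ :=
  (Set.Icc (-(1 / 2)) (1 / 2)).indicator 1

theorem symmLogConcave_centeredIndicator : SymmLogConcave centeredIndicator :=
  .indicator_one measurableSet_Icc (convex_Icc _ _) fun x hx => by
    constructor <;> linarith [hx.1, hx.2]

theorem lintegral_centeredIndicator : ∫⁻ t, centeredIndicator t = 1 := by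
  rw [centeredIndicator, lintegral_indicator_one measurableSet_Icc]
  norm_num

theorem prod_centeredIndicator {ι : Type*} [Fintype ι] (x : ι → ℝ) :
    ∏ i, centeredIndicator (x i) = {x : ι → ℝ | ∀ i, |x i| ≤ 1 / 2}.indicator 1 x := by
  have hfactor (i : ι) : centeredIndicator (x i) = if |x i| ≤ 1 / 2 then 1 else 0 := by
    simp [centeredIndicator, Set.indicator_apply, abs_le]
  simp [hfactor, Finset.prod_ite_zero, Set.indicator_apply]

theorem lessPeaked_centeredIndicator {φ : ℝ → ℝ≥0∞} (hφ : Measurable φ) (hφ_le : ∀ t, φ t ≤ 1)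
    (hφ_int : ∫⁻ t, φ t ≤ 1) : LessPeaked φ centeredIndicator := by
  intro F hF
  have hχ := symmLogConcave_centeredIndicator.measurable
  set c := F (1 / 2)
  have hhalf : |(1 / 2 : ℝ)| = 1 / 2 := abs_of_pos one_half_pos
  have hinside (t : ℝ) (ht : t ∈ Set.Icc (-(1 / 2) : ℝ) (1 / 2)) : c ≤ F t :=
    hF.apply_le_of_abs_le ((abs_le.2 ht).trans_eq hhalf.symm)
  have houtside (t : ℝ) (ht : t ∉ Set.Icc (-(1 / 2) : ℝ) (1 / 2)) : F t ≤ c :=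
    hF.apply_le_of_abs_le (hhalf.trans_le (not_le.1 (mt abs_le.1 ht)).le)
  rcases eq_or_ne c ⊤ with hc | hc
  · have hle : ∫⁻ t, c * centeredIndicator t ≤ ∫⁻ t, F t * centeredIndicator t := by
      refine lintegral_mono fun t => ?_
      by_cases ht : t ∈ Set.Icc (-(1 / 2) : ℝ) (1 / 2)
      · simpa only [centeredIndicator, Set.indicator_of_mem ht] using
          mul_le_mul_left (hinside t ht) _
      · simp only [centeredIndicator, Set.indicator_of_notMem ht, mul_zero, le_refl]
    rw [lintegral_const_mul _ hχ, lintegral_centeredIndicator, hc, mul_one] at hle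
    exact le_top.trans hle
  -- pointwise, `(F - c) * (φ - χ) ≤ 0`, written without subtraction
  have hpointwise (t : ℝ) :
      F t * φ t + c * centeredIndicator t ≤ F t * centeredIndicator t + c * φ t := by
    by_cases ht : t ∈ Set.Icc (-(1 / 2) : ℝ) (1 / 2)
    · obtain ⟨d, hd⟩ := exists_add_of_le (hinside t ht)
      simp only [centeredIndicator, Set.indicator_of_mem ht, hd, Pi.one_apply, mul_one]
      calc (c + d) * φ t + c = d * φ t + (c + c * φ t) := by ring
        _ ≤ d * 1 + (c + c * φ t) := by gcongr; exact hφ_le t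
        _ = c + d + c * φ t := by ring
    · simpa only [centeredIndicator, Set.indicator_of_notMem ht, mul_zero, add_zero, zero_add]
        using mul_le_mul_left (houtside t ht) _
  have hintegrated := lintegral_mono (μ := volume) hpointwise
  rw [lintegral_add_right _ (hχ.const_mul c), lintegral_add_right _ (hφ.const_mul c),
    lintegral_const_mul _ hχ, lintegral_const_mul _ hφ, lintegral_centeredIndicator] at hintegrated
  exact (ENNReal.add_le_add_iff_right (ENNReal.mul_ne_top hc ENNReal.one_ne_top)).1
    (hintegrated.trans (by gcongr))

/-! ### Gaussian integrals -/

/-- The Gaussian density normalised to have both maximum and integral equal to `1`. -/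
noncomputable def gaussian (t : ℝ) : ℝ≥0∞ :=
  ENNReal.ofReal (Real.exp (-Real.pi * t ^ 2))

@[fun_prop]
theorem measurable_gaussian : Measurable gaussian := by
  unfold gaussian
  fun_prop

theorem gaussian_le_one (t : ℝ) : gaussian t ≤ 1 :=
  ENNReal.ofReal_le_one.2 <| Real.exp_le_one_iff.2 <|
    mul_nonpos_of_nonpos_of_nonneg (neg_nonpos.2 Real.pi_nonneg) (sq_nonneg t)

theorem lintegral_gaussian : ∫⁻ t, gaussian t = 1 := by
  rw [show (∫⁻ t, gaussian t) = ENNReal.ofReal (∫ t : ℝ, Real.exp (-Real.pi * t ^ 2)) from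
    (ofReal_integral_eq_lintegral_ofReal (integrable_exp_neg_mul_sq Real.pi_pos)
      (.of_forall fun _ => (Real.exp_pos _).le)).symm]
  rw [integral_gaussian, div_self Real.pi_ne_zero, Real.sqrt_one, ENNReal.ofReal_one]

theorem symmLogConcave_gaussian : SymmLogConcave gaussian where
  measurable := measurable_gaussian
  even t := by simp [gaussian]
  rpow_mul_rpow_le a b ha hb hab x y := by
    have hconvex : (a * x + b * y) ^ 2 ≤ a * x ^ 2 + b * y ^ 2 := by
      obtain rfl : b = 1 - a := by linarith
      nlinarith [mul_nonneg (mul_nonneg ha.le hb.le) (sq_nonneg (x - y))]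
    unfold gaussian
    rw [ENNReal.ofReal_rpow_of_pos (Real.exp_pos _), ENNReal.ofReal_rpow_of_pos (Real.exp_pos _),
      ← ENNReal.ofReal_mul (by positivity), ← Real.exp_mul, ← Real.exp_mul, ← Real.exp_add,
      smul_eq_mul, smul_eq_mul]
    gcongr
    nlinarith [Real.pi_pos]

theorem lessPeaked_gaussian_centeredIndicator : LessPeaked gaussian centeredIndicator :=
  lessPeaked_centeredIndicator symmLogConcave_gaussian.measurable gaussian_le_one
    lintegral_gaussian.le

section GaussianIntegral

variable {ι m : Type*} [Fintype ι] [Fintype m]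

theorem prod_gaussian (x : ι → ℝ) :
    ∏ i, gaussian (x i) = ENNReal.ofReal (Real.exp (-Real.pi * (x ⬝ᵥ x))) := by
  simp only [gaussian, dotProduct, ← sq, Finset.mul_sum, Real.exp_sum]
  exact (ENNReal.ofReal_prod_of_nonneg fun i _ => (Real.exp_pos _).le).symm

theorem symmLogConcave_prod_gaussian_mulVec (M : Matrix m ι ℝ) :
    SymmLogConcave fun x => ∏ j, gaussian ((M *ᵥ x) j) := by
  have hfactor (j : m) : SymmLogConcave fun x => gaussian ((M *ᵥ x) j) :=
    symmLogConcave_gaussian.comp_linearMap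
      (L := (LinearMap.proj j : (m → ℝ) →ₗ[ℝ] ℝ) ∘ₗ M.mulVecLin)
      (LinearMap.continuous_of_finiteDimensional _).measurable
  simpa [Finset.prod_fn] using SymmLogConcave.prod Finset.univ hfactor

theorem lintegral_prod_gaussian : ∫⁻ x : ι → ℝ, ∏ i, gaussian (x i) = 1 := by
  have hint : Integrable fun x : ι → ℝ => ∏ i, Real.exp (-Real.pi * x i ^ 2) :=
    Integrable.fintype_prod fun _ => integrable_exp_neg_mul_sq Real.pi_pos
  calc ∫⁻ x : ι → ℝ, ∏ i, gaussian (x i)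
      = ∫⁻ x : ι → ℝ, ENNReal.ofReal (∏ i, Real.exp (-Real.pi * x i ^ 2)) :=
        lintegral_congr fun x =>
          (ENNReal.ofReal_prod_of_nonneg fun i _ => (Real.exp_pos _).le).symm
    _ = ENNReal.ofReal (∫ x : ι → ℝ, ∏ i, Real.exp (-Real.pi * x i ^ 2)) :=
        (ofReal_integral_eq_lintegral_ofReal hint (.of_forall fun x => by positivity)).symm
    _ = 1 := by
        rw [integral_fintype_prod_volume_eq_pow fun t : ℝ => Real.exp (-Real.pi * t ^ 2)]
        rw [integral_gaussian, div_self Real.pi_ne_zero, Real.sqrt_one, one_pow, ENNReal.ofReal_one]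

theorem lintegral_comp_mulVec [DecidableEq ι] {C : Matrix ι ι ℝ} (hC : C.det ≠ 0)
    {f : (ι → ℝ) → ℝ≥0∞} (hf : Measurable f) :
    ∫⁻ x, f (C *ᵥ x) = ENNReal.ofReal |C.det⁻¹| * ∫⁻ x, f x := by
  have hmeas : Measurable (toLin' C) := (toLin' C).continuous_of_finiteDimensional.measurable
  have h := lintegral_map (μ := volume) hf hmeas
  rw [Real.map_matrix_volume_pi_eq_smul_volume_pi hC, lintegral_smul_measure] at h
  simpa using h.symm

open scoped MatrixOrder in
theorem lintegral_prod_gaussian_mul_prod_gaussian_mulVec [DecidableEq m] (M : Matrix m ι ℝ) :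
    ∫⁻ x, (∏ j, gaussian ((M *ᵥ x) j)) * ∏ i, gaussian (x i) =
      ENNReal.ofReal (√(1 + M * Mᵀ).det)⁻¹ := by
  have : DecidableEq ι := Classical.decEq ι
  have hpos : (1 + Mᵀ * M).PosDef := by
    simpa using PosDef.one.add_posSemidef (posSemidef_conjTranspose_mul_self M)
  obtain ⟨C, hC⟩ := CStarAlgebra.nonneg_iff_eq_star_mul_self.1 hpos.posSemidef.nonneg
  rw [star_eq_conjTranspose, conjTranspose_eq_transpose_of_trivial] at hC
  have hdet : C.det ^ 2 = (1 + M * Mᵀ).det := by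
    rw [det_one_add_mul_comm, hC, det_mul, det_transpose, sq]
  have hC₀ : C.det ≠ 0 := by
    have := hpos.det_pos
    rw [det_one_add_mul_comm, ← hdet] at this
    exact fun h => by simp [h] at this
  have hquad (x : ι → ℝ) : M *ᵥ x ⬝ᵥ M *ᵥ x + x ⬝ᵥ x = C *ᵥ x ⬝ᵥ C *ᵥ x := by
    rw [← dotProduct_transpose_mulVec C, mulVec_mulVec, ← hC, add_mulVec, one_mulVec,
      dotProduct_add, ← mulVec_mulVec, dotProduct_transpose_mulVec, add_comm]
  have hintegrand (x : ι → ℝ) :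
      (∏ j, gaussian ((M *ᵥ x) j)) * ∏ i, gaussian (x i) = ∏ i, gaussian ((C *ᵥ x) i) := by
    simp only [prod_gaussian, ← hquad, mul_add, Real.exp_add]
    exact (ENNReal.ofReal_mul (Real.exp_pos _).le).symm
  rw [lintegral_congr hintegrand, lintegral_comp_mulVec hC₀ (f := fun x => ∏ i, gaussian (x i))
    (by fun_prop), lintegral_prod_gaussian, mul_one, ← hdet, Real.sqrt_sq_eq_abs,
    abs_inv]

end GaussianIntegral

/-! ### Volumes of central sections of the cube -/

/-- The section of the cube `[-T, T]^ι` by the column space of `K`, seen in the coordinates on that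
space given by the columns of `K`. -/
def cubeSection {ι κ : Type*} [Fintype κ] (K : Matrix ι κ ℝ) (T : ℝ) : Set (κ → ℝ) :=
  {k | ∀ i, |(K *ᵥ k) i| ≤ T}

theorem isClosed_cubeSection {ι κ : Type*} [Fintype κ] (K : Matrix ι κ ℝ) (T : ℝ) :
    IsClosed (cubeSection K T) := by
  simp only [cubeSection, Set.ofPred_forall]
  exact isClosed_iInter fun i => isClosed_le (by fun_prop) continuous_const

section CubeSection

variable {m ι κ : Type*} [Fintype m] [Fintype κ]

theorem SymmLogConcave.lintegral_mulVec_add_mulVec [Finite ι] {f : (ι → ℝ) → ℝ≥0∞}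
    (hf : SymmLogConcave f) (N : Matrix ι m ℝ) (K : Matrix ι κ ℝ) :
    SymmLogConcave fun y => ∫⁻ k, f (N *ᵥ y + K *ᵥ k) :=
  .lintegral_prodMk <| hf.comp_linearMap (L := N.mulVecLin.coprod K.mulVecLin)
    (LinearMap.continuous_of_finiteDimensional _).measurable

theorem lintegral_prod_gaussian_smul {c : ℝ} (hc : 0 < c) :
    ∫⁻ y : m → ℝ, ∏ j, gaussian ((c • y) j) = ENNReal.ofReal (c ^ Fintype.card m)⁻¹ := by
  classical
  have hdet : (c • (1 : Matrix m m ℝ)).det = c ^ Fintype.card m := by simp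
  have h := lintegral_comp_mulVec (C := c • (1 : Matrix m m ℝ)) (by rw [hdet]; positivity)
    (f := fun y => ∏ j, gaussian (y j)) (by fun_prop)
  rw [lintegral_prod_gaussian, mul_one, hdet, abs_of_pos (by positivity)] at h
  simpa only [smul_mulVec, one_mulVec] using h

variable [Fintype ι]

theorem lintegral_prod_gaussian_smul_mulVec_mul_le [DecidableEq m] {M : Matrix m ι ℝ}
    {N : Matrix ι m ℝ} {K : Matrix ι κ ℝ} (hMN : M * N = 1) (hMK : M * K = 0)
    (hNK : MeasurePreserving fun p : (m → ℝ) × (κ → ℝ) => N *ᵥ p.1 + K *ᵥ p.2)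
    {f : (ι → ℝ) → ℝ≥0∞} (hf : SymmLogConcave f) {c : ℝ} (hc : 0 < c) :
    ∫⁻ x, (∏ j, gaussian (((c • M) *ᵥ x) j)) * f x ≤
      ENNReal.ofReal (c ^ Fintype.card m)⁻¹ * ∫⁻ k, f (K *ᵥ k) := by
  have hfiber := hf.lintegral_mulVec_add_mulVec N K
  have hgauss := symmLogConcave_prod_gaussian_mulVec (c • M)
  have hM (y : m → ℝ) (k : κ → ℝ) : (c • M) *ᵥ (N *ᵥ y + K *ᵥ k) = c • y := by
    rw [smul_mulVec, mulVec_add, mulVec_mulVec, mulVec_mulVec, hMN, hMK, one_mulVec, zero_mulVec,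
      add_zero]
  calc ∫⁻ x, (∏ j, gaussian (((c • M) *ᵥ x) j)) * f x
      = ∫⁻ p : (m → ℝ) × (κ → ℝ),
          (∏ j, gaussian ((c • p.1 : m → ℝ) j)) * f (N *ᵥ p.1 + K *ᵥ p.2) := by
        simpa only [Pi.mul_apply, hM] using
          (hNK.lintegral_comp (hgauss.measurable.mul hf.measurable)).symm
    _ = ∫⁻ y : m → ℝ, (∏ j, gaussian ((c • y) j)) * ∫⁻ k, f (N *ᵥ y + K *ᵥ k) := by
        have hf_meas : Measurable fun p : (m → ℝ) × (κ → ℝ) => f (N *ᵥ p.1 + K *ᵥ p.2) :=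
          hf.measurable.comp hNK.measurable
        have hfiber_meas (y : m → ℝ) : Measurable fun k => f (N *ᵥ y + K *ᵥ k) :=
          hf_meas.comp measurable_prodMk_left
        have hmeas : Measurable fun p : (m → ℝ) × (κ → ℝ) =>
            (∏ j, gaussian ((c • p.1) j)) * f (N *ᵥ p.1 + K *ᵥ p.2) := .mul (by fun_prop) hf_meas
        rw [Measure.volume_eq_prod, lintegral_prod _ hmeas.aemeasurable]
        simp only [lintegral_const_mul _ (hfiber_meas _)]
    _ ≤ ∫⁻ y : m → ℝ, (∏ j, gaussian ((c • y) j)) * ∫⁻ k, f (K *ᵥ k) := by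
        refine lintegral_mono fun y => mul_le_mul_right ?_ _
        simpa only [mulVec_zero, zero_add] using hfiber.le_apply_zero y
    _ = ENNReal.ofReal (c ^ Fintype.card m)⁻¹ * ∫⁻ k, f (K *ᵥ k) := by
        rw [lintegral_mul_const _ (by fun_prop), lintegral_prod_gaussian_smul hc]

theorem lintegral_mul_prod_gaussian_le {f : (ι → ℝ) → ℝ≥0∞} (hf : SymmLogConcave f) :
    ∫⁻ x, f x * ∏ i, gaussian (x i) ≤ ∫⁻ x, f x * ∏ i, centeredIndicator (x i) :=
  LessPeaked.lintegral_mul_prod_le (fun _ => lessPeaked_gaussian_centeredIndicator)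
    (fun _ => symmLogConcave_gaussian) (fun _ => symmLogConcave_centeredIndicator) hf _

theorem symmLogConcave_prod_centeredIndicator :
    SymmLogConcave fun x : ι → ℝ => ∏ i, centeredIndicator (x i) := by
  have hfactor (i : ι) : SymmLogConcave fun x : ι → ℝ => centeredIndicator (x i) :=
    symmLogConcave_centeredIndicator.comp_linearMap (L := (LinearMap.proj i : (ι → ℝ) →ₗ[ℝ] ℝ))
      (measurable_pi_apply i)
  simpa [Finset.prod_fn] using SymmLogConcave.prod Finset.univ hfactor

theorem det_mul_transpose_pos_of_mul_eq_one [DecidableEq m] {M : Matrix m ι ℝ} {N : Matrix ι m ℝ}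
    (hMN : M * N = 1) : 0 < (M * Mᵀ).det := by
  have hinj : Function.Injective fun v => v ᵥ* M := fun v w hvw => by
    simpa [vecMul_vecMul, hMN] using congrArg (· ᵥ* N) hvw
  simpa using (PosDef.mul_conjTranspose_self M hinj).det_pos

theorem inv_sqrt_det_add_smul_le_volume_cubeSection [DecidableEq m] {M : Matrix m ι ℝ}
    {N : Matrix ι m ℝ} {K : Matrix ι κ ℝ} (hMN : M * N = 1) (hMK : M * K = 0)
    (hNK : MeasurePreserving fun p : (m → ℝ) × (κ → ℝ) => N *ᵥ p.1 + K *ᵥ p.2)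
    {ε : ℝ} (hε : 0 < ε) :
    ENNReal.ofReal (√(ε ^ 2 • 1 + M * Mᵀ).det)⁻¹ ≤ volume (cubeSection K (1 / 2)) := by
  have hdet : (1 + (ε⁻¹ • M) * (ε⁻¹ • M)ᵀ).det =
      ((ε⁻¹) ^ Fintype.card m) ^ 2 * (ε ^ 2 • 1 + M * Mᵀ).det := by
    rw [← pow_mul, mul_comm _ 2, pow_mul, ← det_smul]
    congr 1
    rw [smul_add, smul_smul, ← mul_pow, inv_mul_cancel₀ hε.ne', one_pow, one_smul, transpose_smul,
      Matrix.smul_mul, Matrix.mul_smul, smul_smul, sq]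
  have hvolume : ∫⁻ k, ∏ i, centeredIndicator ((K *ᵥ k) i) =
      volume (cubeSection K (1 / 2)) := by
    rw [← lintegral_indicator_one (isClosed_cubeSection K _).measurableSet]
    exact lintegral_congr fun k => prod_centeredIndicator _
  have hle := calc ENNReal.ofReal (√(1 + (ε⁻¹ • M) * (ε⁻¹ • M)ᵀ).det)⁻¹
      = ∫⁻ x, (∏ j, gaussian (((ε⁻¹ • M) *ᵥ x) j)) * ∏ i, gaussian (x i) :=
        (lintegral_prod_gaussian_mul_prod_gaussian_mulVec _).symm
    _ ≤ ∫⁻ x, (∏ j, gaussian (((ε⁻¹ • M) *ᵥ x) j)) * ∏ i, centeredIndicator (x i) :=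
        lintegral_mul_prod_gaussian_le (symmLogConcave_prod_gaussian_mulVec _)
    _ ≤ ENNReal.ofReal (ε⁻¹ ^ Fintype.card m)⁻¹ *
          ∫⁻ k, ∏ i, centeredIndicator ((K *ᵥ k) i) :=
        lintegral_prod_gaussian_smul_mulVec_mul_le hMN hMK hNK
          symmLogConcave_prod_centeredIndicator (inv_pos.2 hε)
  rw [hvolume, hdet, Real.sqrt_mul (by positivity), Real.sqrt_sq (by positivity), mul_inv,
    ENNReal.ofReal_mul (by positivity)] at hle
  exact (ENNReal.mul_le_mul_iff_right (by simp [hε]) ENNReal.ofReal_ne_top).1 hle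

theorem inv_sqrt_det_le_volume_cubeSection [DecidableEq m] {M : Matrix m ι ℝ}
    {N : Matrix ι m ℝ} {K : Matrix ι κ ℝ} (hMN : M * N = 1) (hMK : M * K = 0)
    (hNK : MeasurePreserving fun p : (m → ℝ) × (κ → ℝ) => N *ᵥ p.1 + K *ᵥ p.2) :
    ENNReal.ofReal (√(M * Mᵀ).det)⁻¹ ≤ volume (cubeSection K (1 / 2)) := by
  have hcont : ContinuousAt (fun ε : ℝ => (√(ε ^ 2 • 1 + M * Mᵀ).det)⁻¹) 0 := by
    have hdet : Continuous fun ε : ℝ => √(ε ^ 2 • 1 + M * Mᵀ).det := by fun_prop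
    refine hdet.continuousAt.inv₀ ?_
    simpa using (Real.sqrt_pos.2 (det_mul_transpose_pos_of_mul_eq_one hMN)).ne'
  have hlim := ENNReal.tendsto_ofReal
    (hcont.tendsto.mono_left (nhdsWithin_le_nhds (s := Set.Ioi 0)))
  rw [zero_pow two_ne_zero, zero_smul, zero_add] at hlim
  refine le_of_tendsto hlim (eventually_nhdsWithin_of_forall fun ε hε => ?_)
  exact inv_sqrt_det_add_smul_le_volume_cubeSection hMN hMK hNK hε

end CubeSection

/-! ### Lattice points -/

theorem measurePreserving_intCast_mulVec_of_mul_eq_one {ι ι' : Type*} [Fintype ι] [Fintype ι']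
    [DecidableEq ι] (e : ι' ≃ ι) {U : Matrix ι ι' ℤ} {W : Matrix ι' ι ℤ} (hUW : U * W = 1) :
    MeasurePreserving fun x : ι' → ℝ => U.map (Int.castRingHom ℝ) *ᵥ x := by
  set C : Matrix ι ι ℤ := U.submatrix id e.symm
  have hdet_int : |C.det| = 1 := by
    refine Int.isUnit_iff_abs_eq.1 (isUnit_det_of_right_inverse (B := W.submatrix e.symm id) ?_)
    rw [submatrix_mul_equiv, hUW, submatrix_id_id]
  have hdet : |(C.map (Int.castRingHom ℝ)).det| = 1 := by
    change |((Int.castRingHom ℝ).mapMatrix C).det| = 1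
    rw [← RingHom.map_det, eq_intCast]
    exact_mod_cast hdet_int
  have hC : MeasurePreserving (toLin' (C.map (Int.castRingHom ℝ))) := by
    refine ⟨(LinearMap.continuous_of_finiteDimensional _).measurable, ?_⟩
    rw [Real.map_matrix_volume_pi_eq_smul_volume_pi (abs_pos.1 (by rw [hdet]; exact one_pos)),
      abs_inv, hdet, inv_one, ENNReal.ofReal_one, one_smul]
  have hpermute (x : ι' → ℝ) : MeasurableEquiv.piCongrLeft (fun _ => ℝ) e x = x ∘ e.symm := by
    funext i
    simp [MeasurableEquiv.coe_piCongrLeft, Equiv.piCongrLeft_apply]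
  have hU : (fun x : ι' → ℝ => U.map (Int.castRingHom ℝ) *ᵥ x) =
      toLin' (C.map (Int.castRingHom ℝ)) ∘ MeasurableEquiv.piCongrLeft (fun _ => ℝ) e := by
    funext x
    rw [Function.comp_apply, hpermute, toLin'_apply, ← submatrix_map, submatrix_mulVec_equiv]
    simp [Function.comp_assoc]
  rw [hU]
  exact hC.comp (volume_measurePreserving_piCongrLeft (fun _ => ℝ) e)

theorem measurePreserving_intCast_mulVec_add_mulVec {m ι κ : Type*} [Fintype m] [Fintype ι]
    [Fintype κ] [DecidableEq m] [DecidableEq κ] (e : m ⊕ κ ≃ ι) {M : Matrix m ι ℤ}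
    {N : Matrix ι m ℤ} {K : Matrix ι κ ℤ} {L : Matrix κ ι ℤ} (h : fromRows M L * fromCols N K = 1) :
    MeasurePreserving fun p : (m → ℝ) × (κ → ℝ) =>
      N.map (Int.castRingHom ℝ) *ᵥ p.1 + K.map (Int.castRingHom ℝ) *ᵥ p.2 := by
  classical
  have hinv := (mul_eq_one_comm_of_card_eq _ _ ℤ (Fintype.card_congr e)).1 h
  have hglue (p : (m → ℝ) × (κ → ℝ)) :
      (MeasurableEquiv.sumPiEquivProdPi fun _ : m ⊕ κ => ℝ).symm p = Sum.elim p.1 p.2 := by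
    ext (j | k) <;> rfl
  simpa only [Function.comp_def, hglue, fromCols_map, fromCols_mulVec_sumElim] using
    (measurePreserving_intCast_mulVec_of_mul_eq_one e hinv).comp
      (volume_measurePreserving_sumPiEquivProdPi_symm fun _ => ℝ)

/-- Minkowski's theorem for the integer lattice. -/
theorem exists_ne_zero_intCast_mem_of_two_pow_le_volume {κ : Type*} [Fintype κ] [Nonempty κ]
    {S : Set (κ → ℝ)} (hS_neg : ∀ x ∈ S, -x ∈ S) (hS_convex : Convex ℝ S) (hS : IsCompact S)
    (hS_volume : 2 ^ Fintype.card κ ≤ volume S) :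
    ∃ z : κ → ℤ, z ≠ 0 ∧ (fun k => (z k : ℝ)) ∈ S := by
  classical
  set Λ := Submodule.span ℤ (Set.range (Pi.basisFun ℝ κ))
  have hcovolume : volume (ZSpan.fundamentalDomain (Pi.basisFun ℝ κ)) = 1 := by
    simp [ZSpan.fundamentalDomain_pi_basisFun, volume_pi_pi]
  have : Countable Λ.toAddSubgroup := inferInstanceAs (Countable Λ)
  have : DiscreteTopology Λ.toAddSubgroup := inferInstanceAs (DiscreteTopology Λ)
  obtain ⟨x, hx, hxS⟩ := exists_ne_zero_mem_lattice_of_measure_mul_two_pow_le_measure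
    (L := Λ.toAddSubgroup) (ZSpan.isAddFundamentalDomain (Pi.basisFun ℝ κ) volume) hS_neg hS_convex
    hS (by rwa [hcovolume, one_mul, Module.finrank_fintype_fun_eq_card])
  have hcoord (k : κ) : ∃ n : ℤ, (n : ℝ) = (x : κ → ℝ) k := by
    simpa using ((Pi.basisFun ℝ κ).mem_span_iff_repr_mem ℤ (x : κ → ℝ)).1 x.2 k
  choose z hz using hcoord
  refine ⟨z, ?_, by rwa [funext hz]⟩
  rintro rfl
  exact hx (Subtype.ext (funext fun k => by simpa using (hz k).symm))

section CubeSectionLatticePoint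

variable {ι κ : Type*} [Fintype κ]

theorem neg_mem_cubeSection {K : Matrix ι κ ℝ} {T : ℝ} {k : κ → ℝ} (hk : k ∈ cubeSection K T) :
    -k ∈ cubeSection K T := fun i => by
  simpa only [mulVec_neg, Pi.neg_apply, abs_neg] using hk i

theorem convex_cubeSection (K : Matrix ι κ ℝ) (T : ℝ) : Convex ℝ (cubeSection K T) := by
  have hcube : Convex ℝ (Set.univ.pi fun _ : ι => Set.Icc (-T) T) :=
    convex_pi fun _ _ => convex_Icc _ _
  have hpreimage : cubeSection K T = K.mulVecLin ⁻¹' Set.univ.pi fun _ => Set.Icc (-T) T := by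
    ext k
    simp only [cubeSection, abs_le, Set.mem_ofPred_eq, Set.mem_preimage, Set.mem_univ_pi,
      Set.mem_Icc, mulVecLin_apply]
  exact hpreimage ▸ hcube.linear_preimage K.mulVecLin

theorem volume_cubeSection (K : Matrix ι κ ℝ) {T : ℝ} (hT : 0 < T) :
    volume (cubeSection K T) =
      ENNReal.ofReal ((2 * T) ^ Fintype.card κ) * volume (cubeSection K (1 / 2)) := by
  have h2T : 0 < 2 * T := by positivity
  have hscale : cubeSection K T = (2 * T) • cubeSection K (1 / 2) := by
    ext k
    rw [Set.mem_smul_set_iff_inv_smul_mem₀ h2T.ne']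
    refine forall_congr' fun i => ?_
    change |(K *ᵥ k) i| ≤ T ↔ |(K *ᵥ ((2 * T)⁻¹ • k)) i| ≤ 1 / 2
    rw [mulVec_smul, Pi.smul_apply, smul_eq_mul, abs_mul, abs_of_pos (inv_pos.2 h2T),
      inv_mul_le_iff₀ h2T, show 2 * T * (1 / 2) = T by ring]
  rw [hscale, Measure.addHaar_smul, Module.finrank_fintype_fun_eq_card,
    abs_of_pos (pow_pos h2T _)]

variable [Fintype ι] [DecidableEq κ]

theorem isCompact_cubeSection {K : Matrix ι κ ℝ} {L : Matrix κ ι ℝ} (hLK : L * K = 1) (T : ℝ) :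
    IsCompact (cubeSection K T) := by
  have hcube : IsCompact (Set.univ.pi fun _ : ι => Set.Icc (-T) T) :=
    isCompact_univ_pi fun _ => isCompact_Icc
  refine (hcube.image (f := (L *ᵥ ·)) (by fun_prop)).of_isClosed_subset
    (isClosed_cubeSection K T) fun k hk => ?_
  exact ⟨K *ᵥ k, fun i _ => abs_le.1 (hk i), by simp [hLK]⟩

theorem exists_ne_zero_abs_mulVec_le [Nonempty κ] {K : Matrix ι κ ℤ} {L : Matrix κ ι ℤ}
    (hLK : L * K = 1) {v : ℝ} (hv : 0 < v)
    (hvolume : ENNReal.ofReal v⁻¹ ≤ volume (cubeSection (K.map (Int.castRingHom ℝ)) (1 / 2))) :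
    ∃ z : κ → ℤ, z ≠ 0 ∧ ∀ i, |((K *ᵥ z) i : ℝ)| ≤ v ^ ((Fintype.card κ : ℝ)⁻¹) := by
  set K' := K.map (Int.castRingHom ℝ)
  set T := v ^ ((Fintype.card κ : ℝ)⁻¹)
  have hT : 0 < T := Real.rpow_pos_of_pos hv _
  have hTv : T ^ Fintype.card κ = v := Real.rpow_inv_natCast_pow hv.le Fintype.card_ne_zero
  have hLK' : L.map (Int.castRingHom ℝ) * K' = 1 := by
    rw [← Matrix.map_mul, hLK]
    simp
  have hvolume_T : 2 ^ Fintype.card κ ≤ volume (cubeSection K' T) := calc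
    (2 : ℝ≥0∞) ^ Fintype.card κ
      = ENNReal.ofReal ((2 * T) ^ Fintype.card κ) * ENNReal.ofReal v⁻¹ := by
        rw [← ENNReal.ofReal_mul (by positivity), mul_pow, hTv, mul_inv_cancel_right₀ hv.ne',
          ENNReal.ofReal_pow two_pos.le, ENNReal.ofReal_ofNat]
    _ ≤ volume (cubeSection K' T) := by
        rw [volume_cubeSection _ hT]
        gcongr
  obtain ⟨z, hz, hzT⟩ := exists_ne_zero_intCast_mem_of_two_pow_le_volume
    (fun _ => neg_mem_cubeSection) (convex_cubeSection K' T) (isCompact_cubeSection hLK' T)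
    hvolume_T
  exact ⟨z, hz, fun i => by simpa [K', mulVec, dotProduct] using hzT i⟩

end CubeSectionLatticePoint

/-! ### Maximal minors and primitive matrices -/

section MaximalMinors

variable {R m ι : Type*} [CommRing R] [Fintype m] [DecidableEq m] [Fintype ι]

theorem dvd_det_mul_of_forall_dvd_det_submatrix {d : R} {M : Matrix m ι R}
    (h : ∀ g : m ↪ ι, d ∣ (M.submatrix id g).det) (N : Matrix ι m R) : d ∣ (M * N).det := by
  classical
  have hrows : (M * N)ᵀ = fun j => ∑ k, N k j • Mᵀ k := by
    funext j i
    simp [mul_apply, Finset.sum_apply, mul_comm]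
  rw [← det_transpose, hrows]
  change d ∣ detRowAlternating.toMultilinearMap fun j => ∑ k, N k j • Mᵀ k
  rw [MultilinearMap.map_sum]
  refine Finset.dvd_sum fun g _ => ?_
  rw [MultilinearMap.map_smul_univ _ (fun j => N (g j) j) fun j => Mᵀ (g j)]
  refine Dvd.dvd.mul_left ?_ _
  by_cases hg : Function.Injective g
  · have hminor := h ⟨g, hg⟩
    rwa [← det_transpose] at hminor
  · have hrepeat : ¬Function.Injective fun j => Mᵀ (g j) := fun hinj => hg (.of_comp hinj)
    exact (detRowAlternating.map_eq_zero_of_not_injective _ hrepeat).symm ▸ dvd_zero d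

/-- The greatest common divisor of the maximal minors of `A`, the number `D` of Bombieri and Vaaler
when `A` is an integer matrix. Reordering the columns only changes the sign of a minor, so one may
range over all injections of the row indices into the column indices. -/
noncomputable def minorsGcd [NormalizedGCDMonoid R] (A : Matrix m ι R) : R :=
  Finset.univ.gcd fun g : m ↪ ι => (A.submatrix id g).det

theorem minorsGcd_mul [StrongNormalizedGCDMonoid R] (H : Matrix m m R) (M : Matrix m ι R) :
    minorsGcd (H * M) = normalize H.det * minorsGcd M := by
  have hminor (g : m ↪ ι) :
      ((H * M).submatrix id g).det = H.det * (M.submatrix id g).det := by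
    rw [← det_mul, submatrix_mul _ _ id id g Function.bijective_id, submatrix_id_id]
  simp only [minorsGcd, hminor, Finset.gcd_mul_left]

theorem minorsGcd_eq_one_of_mul_eq_one [NormalizedGCDMonoid R] {M : Matrix m ι R}
    {N : Matrix ι m R} (hMN : M * N = 1) : minorsGcd M = 1 := by
  have hdvd : minorsGcd M ∣ (M * N).det :=
    dvd_det_mul_of_forall_dvd_det_submatrix (fun g => Finset.gcd_dvd (Finset.mem_univ g)) N
  rw [hMN, det_one] at hdvd
  rw [minorsGcd, ← Finset.normalize_gcd, normalize_eq_one]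
  exact isUnit_of_dvd_one hdvd

end MaximalMinors

section PrimitiveMatrix

variable {R m ι : Type*} [CommRing R] [IsDomain R] [Fintype m] [DecidableEq m] [Fintype ι]

theorem card_add_finrank_ker_mulVecLin_of_mul_eq_one {M : Matrix m ι R} {N : Matrix ι m R}
    (hMN : M * N = 1) :
    Fintype.card m + Module.finrank R (LinearMap.ker M.mulVecLin) = Fintype.card ι := by
  have hsurj : Function.Surjective M.mulVecLin := fun y => ⟨N *ᵥ y, by simp [hMN]⟩
  rw [← Module.finrank_fintype_fun_eq_card R (η := m),
    ← Module.finrank_fintype_fun_eq_card R (η := ι),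
    ← (M.mulVecLin.quotKerEquivOfSurjective hsurj).finrank_eq]
  exact Submodule.finrank_quotient_add_finrank _

variable [IsPrincipalIdealRing R]

theorem exists_eq_mul_of_rank_eq_card {A : Matrix m ι R} (hA : A.rank = Fintype.card m) :
    ∃ (H : Matrix m m R) (M : Matrix m ι R) (N : Matrix ι m R),
      A = H * M ∧ M * N = 1 ∧ H.det ≠ 0 := by
  classical
  set W := LinearMap.range A.mulVecLin
  let b : Module.Basis m R W :=
    (Module.finBasisOfFinrankEq R W hA).reindex (Fintype.equivFin m).symm
  let incl : (m → R) →ₗ[R] (m → R) := W.subtype ∘ₗ b.equivFun.symm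
  let coord : (ι → R) →ₗ[R] (m → R) := b.equivFun ∘ₗ A.mulVecLin.rangeRestrict
  have hincl : Function.Injective incl := W.injective_subtype.comp b.equivFun.symm.injective
  have hcoord : Function.Surjective coord :=
    b.equivFun.surjective.comp A.mulVecLin.surjective_rangeRestrict
  have hA_eq : incl ∘ₗ coord = A.mulVecLin := by
    ext
    simp [incl, coord]
  obtain ⟨lift, hlift⟩ := Module.projective_lifting_property coord LinearMap.id hcoord
  refine ⟨incl.toMatrix', coord.toMatrix', lift.toMatrix', ?_, ?_, ?_⟩
  · rw [← LinearMap.toMatrix'_comp, hA_eq, ← toLin'_apply', LinearMap.toMatrix'_toLin']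
  · rw [← LinearMap.toMatrix'_comp, hlift, LinearMap.toMatrix'_id]
  · intro hdet
    obtain ⟨v, hv, hv_zero⟩ := exists_mulVec_eq_zero_iff.2 hdet
    rw [LinearMap.toMatrix'_mulVec] at hv_zero
    exact hv (hincl (hv_zero.trans (map_zero incl).symm))

theorem exists_fromRows_mul_fromCols_eq_one {κ : Type*} [Fintype κ] [DecidableEq κ]
    (hcard : Fintype.card m + Fintype.card κ = Fintype.card ι)
    {M : Matrix m ι R} {N : Matrix ι m R} (hMN : M * N = 1) :
    ∃ (K : Matrix ι κ R) (L : Matrix κ ι R), fromRows M L * fromCols N K = 1 := by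
  classical
  set W := LinearMap.ker M.mulVecLin
  have hW : Module.finrank R W = Fintype.card κ :=
    Nat.add_left_cancel ((card_add_finrank_ker_mulVecLin_of_mul_eq_one hMN).trans hcard.symm)
  let b : Module.Basis κ R W :=
    (Module.finBasisOfFinrankEq R W hW).reindex (Fintype.equivFin κ).symm
  let proj : (ι → R) →ₗ[R] W :=
    (LinearMap.id - (N * M).mulVecLin).codRestrict W fun x => by
      simp [W, mulVec_sub, ← Matrix.mul_assoc, hMN]
  have hproj (x : ι → R) : (proj x : ι → R) = x - N *ᵥ (M *ᵥ x) := by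
    simp [proj]
  let K := (W.subtype ∘ₗ b.equivFun.symm.toLinearMap).toMatrix'
  let L := (b.equivFun.toLinearMap ∘ₗ proj).toMatrix'
  have hK (k : κ → R) : K *ᵥ k = (b.equivFun.symm k : W) := LinearMap.toMatrix'_mulVec _ k
  have hL (x : ι → R) : L *ᵥ x = b.equivFun (proj x) := LinearMap.toMatrix'_mulVec _ x
  have hMK : M * K = 0 := by
    refine ext_of_mulVec_single fun k => ?_
    rw [← mulVec_mulVec, hK, zero_mulVec]
    exact (b.equivFun.symm _).2
  have hLN : L * N = 0 := by
    refine ext_of_mulVec_single fun j => ?_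
    have hproj_zero : proj (N *ᵥ Pi.single j 1) = 0 := by
      ext1
      rw [hproj, mulVec_mulVec _ M, hMN, one_mulVec, sub_self, ZeroMemClass.coe_zero]
    rw [← mulVec_mulVec, hL, hproj_zero, map_zero, zero_mulVec]
  have hLK : L * K = 1 := by
    refine ext_of_mulVec_single fun k => ?_
    have hproj_coe (w : W) : proj w = w := by
      have hw : M *ᵥ (w : ι → R) = 0 := w.2
      ext1
      rw [hproj, hw, mulVec_zero, sub_zero]
    rw [← mulVec_mulVec, hK, hL, hproj_coe, one_mulVec, LinearEquiv.apply_symm_apply]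
  exact ⟨K, L, by rw [fromRows_mul_fromCols, hMN, hMK, hLN, hLK, fromBlocks_one]⟩

end PrimitiveMatrix

theorem exists_ne_zero_mulVec_eq_zero_of_mul_eq_one {m ι : Type*} [Fintype m] [DecidableEq m]
    [Fintype ι] (hcard : Fintype.card m < Fintype.card ι) {M : Matrix m ι ℤ} {N : Matrix ι m ℤ}
    (hMN : M * N = 1) :
    ∃ x : ι → ℤ, x ≠ 0 ∧ M *ᵥ x = 0 ∧ ∀ i, |(x i : ℝ)| ≤
      √|((M * Mᵀ).det : ℝ)| ^ ((Fintype.card ι - Fintype.card m : ℝ)⁻¹) := by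
  classical
  let κ := Fin (Fintype.card ι - Fintype.card m)
  have : Nonempty κ := ⟨⟨0, by omega⟩⟩
  have hcard_κ : Fintype.card m + Fintype.card κ = Fintype.card ι := by simp [κ]; omega
  obtain ⟨K, L, h⟩ := exists_fromRows_mul_fromCols_eq_one hcard_κ hMN
  have hvol := measurePreserving_intCast_mulVec_add_mulVec
    (Fintype.equivOfCardEq (by simpa using hcard_κ)) h
  rw [fromRows_mul_fromCols, ← fromBlocks_one, fromBlocks_inj] at h
  obtain ⟨-, hMK, -, hLK⟩ := h
  have hMN' : M.map (Int.castRingHom ℝ) * N.map (Int.castRingHom ℝ) = 1 := by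
    rw [← Matrix.map_mul, hMN]
    simp
  have hMK' : M.map (Int.castRingHom ℝ) * K.map (Int.castRingHom ℝ) = 0 := by
    rw [← Matrix.map_mul, hMK]
    simp
  have hdet_pos := det_mul_transpose_pos_of_mul_eq_one hMN'
  have hdet : (M.map (Int.castRingHom ℝ) * (M.map (Int.castRingHom ℝ))ᵀ).det =
      |((M * Mᵀ).det : ℝ)| := by
    rw [← abs_of_pos hdet_pos, ← transpose_map, ← Matrix.map_mul]
    exact congrArg abs ((Int.castRingHom ℝ).map_det _).symm
  obtain ⟨z, hz, hz_le⟩ := exists_ne_zero_abs_mulVec_le hLK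
    (Real.sqrt_pos.2 hdet_pos)
    (inv_sqrt_det_le_volume_cubeSection hMN' hMK' hvol)
  refine ⟨K *ᵥ z, fun h₀ => hz ?_, by simp [hMK], fun i => ?_⟩
  · simpa [hLK] using congrArg (L *ᵥ ·) h₀
  · rw [← Nat.cast_sub hcard.le, ← hdet]
    simpa [κ] using hz_le i

theorem sqrt_abs_det_mul_mul_transpose {m ι : Type*} [Fintype m] [DecidableEq m] [Fintype ι]
    (H : Matrix m m ℤ) (M : Matrix m ι ℤ) :
    √|((H * M * (H * M)ᵀ).det : ℝ)| = |(H.det : ℝ)| * √|((M * Mᵀ).det : ℝ)| := by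
  have hdet : (H * M * (H * M)ᵀ).det = H.det ^ 2 * (M * Mᵀ).det := by
    rw [transpose_mul, Matrix.mul_assoc, ← Matrix.mul_assoc M, det_mul, det_mul, det_transpose]
    ring
  rw [hdet, Int.cast_mul, Int.cast_pow, abs_mul, abs_sq, Real.sqrt_mul (sq_nonneg _),
    Real.sqrt_sq_eq_abs]

theorem stmt_15 (s r : ℕ) (hsr : s < r) (A : Matrix (Fin s) (Fin r) ℤ)
    (hrank : A.rank = s)
    (D : ℤ)
    (hD : D = Finset.gcd Finset.univ
      (fun g : Fin s ↪ Fin r => (A.submatrix id g).det)) :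
    ∃ x : Fin r → ℤ, x ≠ 0 ∧ A.mulVec x = 0 ∧
      ∀ i, (|x i| : ℝ) ≤
        ((D : ℝ)⁻¹ * Real.sqrt |((A * A.transpose).det : ℝ)|) ^
          ((1 : ℝ) / (r - s : ℝ)) := by
  obtain ⟨H, M, N, rfl, hMN, hH⟩ := exists_eq_mul_of_rank_eq_card (A := A) (by simpa using hrank)
  obtain ⟨x, hx, hMx, hx_le⟩ := exists_ne_zero_mulVec_eq_zero_of_mul_eq_one (by simpa using hsr) hMN
  refine ⟨x, hx, by rw [← mulVec_mulVec, hMx, mulVec_zero], fun i => ?_⟩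
  have hD_eq : (D : ℝ) = |(H.det : ℝ)| := by
    have hgcd : D = minorsGcd (H * M) := hD
    rw [hgcd, minorsGcd_mul, minorsGcd_eq_one_of_mul_eq_one hMN, mul_one, ← Int.abs_eq_normalize,
      Int.cast_abs]
  have hbound : (D : ℝ)⁻¹ * √|((H * M * (H * M)ᵀ).det : ℝ)| = √|((M * Mᵀ).det : ℝ)| := by
    rw [hD_eq, sqrt_abs_det_mul_mul_transpose, inv_mul_cancel_left₀ (by positivity)]
  rw [hbound, one_div]
  simpa using hx_le i
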